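/- Let condition B hold, let v_ε → ∞ as ε → 0, and assume condition H: f_ε > 0 for all sufficiently small ε. Then: (i) for every T > 0 and δ > 0, P(sup_{0≤t≤T} |f_ε^{−1}κ_ε(t) − t| > δ) → 0 as ε → 0; (ii) condition I: f_ε → f₀ ∈ [0, ∞] as ε → 0 is necessary and sufficient for the convergence in distribution (with possibly improper limit) of κ_ε(1), and in that case the limit is the constant f₀ and κ_ε(t) → f₀t in probability for every t > 0; (iii) if f₀ < ∞ then for every T, δ > 0, P(sup_{0≤t≤T} |κ_ε(t) − f₀t| > δ) → 0 as ε → 0; (iv) if f₀ = ∞ then min(T, κ_ε(t)) → T in probability as ε → 0 for every T > 0 and t > 0. -/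

import Mathlib

open MeasureTheory Filter Set
open scoped Topology ENNReal

noncomputable section

/-- Condition B: there exists a ring chain of states `c 0, c 1, …, c N = c 0`
containing all states of the phase space, with
`liminf_{ε→0+} p ε (c (k-1)) (c k) > 0` for `k = 1, …, N`. -/
def CondB {m : ℕ} (p : ℝ → Fin m → Fin m → ℝ) : Prop :=
  ∃ N : ℕ, 0 < N ∧ ∃ c : ℕ → Fin m, c N = c 0 ∧
    (∀ i : Fin m, ∃ k ≤ N, c k = i) ∧
    ∀ k < N, 0 < Filter.liminf (fun ε => p ε (c k) (c (k + 1))) (𝓝[>] (0 : ℝ))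

/-- `π` is a stationary distribution of the transition matrix `p`. -/
def IsStationaryDist {m : ℕ} (p : Fin m → Fin m → ℝ) (π : Fin m → ℝ) : Prop :=
  (∀ i, 0 ≤ π i) ∧ (∑ i, π i = 1) ∧ ∀ j, π j = ∑ i, π i * p i j

/-- The deterministic-reward step-sum process `κ_ε(t) = Σ_{n=1}^{[t v_ε]} f_{ε,η_{ε,n−1}}`. -/
def fStep {m : ℕ} {Ω : Type} (η : ℝ → ℕ → Ω → Fin m) (f : ℝ → Fin m → ℝ)
    (v : ℝ → ℝ) (ε t : ℝ) (ω : Ω) : ℝ :=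
  ∑ n ∈ Finset.Icc 1 (Nat.floor (t * v ε)), f ε (η ε (n - 1) ω)

/-- `f_ε = v_ε Σ_i π_{ε,i} f_{ε,i}`. -/
def fBar {m : ℕ} (π : ℝ → Fin m → ℝ) (f : ℝ → Fin m → ℝ) (v : ℝ → ℝ) (ε : ℝ) : ℝ :=
  v ε * ∑ i, π ε i * f ε i

lemma condB_extract {m : ℕ} (p : ℝ → Fin m → Fin m → ℝ) (hB : CondB p) :
    ∃ (K : ℕ) (a : ℝ) (c : ℕ → Fin m), 0 < a ∧ a ≤ 1 ∧
      (∀ i j, ∃ k r, r ≤ K ∧ c k = i ∧ c (k + r) = j) ∧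
      ∀ᶠ ε in 𝓝[>] (0:ℝ), ∀ k, a ≤ p ε (c k) (c (k + 1)) := by
  obtain ⟨N, hN, c, hc, hcov, hpos⟩ := hB
  have h1 : ∀ k, ∃ a : ℝ, 0 < a ∧ (k < N → ∀ᶠ ε in 𝓝[>] (0:ℝ), a ≤ p ε (c k) (c (k+1))) := by
    intro k
    by_cases hk : k < N
    · have h := hpos k hk
      rw [Filter.liminf_eq] at h
      by_contra hcon
      push Not at hcon
      refine absurd h (not_lt.mpr (Real.sSup_nonpos ?_))
      intro x hx
      by_contra hx0
      refine (hcon x (not_le.mp hx0)).2 ?_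
      have hx' : ∀ᶠ ε in 𝓝[>] (0:ℝ), x ≤ p ε (c k) (c (k+1)) := hx
      filter_upwards [hx'] with ε h
      exact not_lt.mpr h
    · exact ⟨1, one_pos, fun h => absurd h hk⟩
  choose A hA0 hA using h1
  obtain ⟨k0, -, hk0⟩ := Finset.exists_min_image (Finset.range N) A ⟨0, by simpa using hN⟩
  have hmod : ∀ k, c ((k + 1) % N) = c (k % N + 1) := by
    intro k
    have hlt := Nat.mod_lt k hN
    by_cases h : k % N + 1 = N
    · rw [Nat.add_mod_eq_ite]
      rcases Nat.lt_or_ge 1 N with h1 | h1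
      · simp [Nat.mod_eq_of_lt h1, h, hc]
      · have : N = 1 := by omega
        subst this
        simp [Nat.mod_one, hc]
    · have : (k + 1) % N = k % N + 1 := by
        rw [Nat.add_mod, Nat.mod_eq_of_lt (a := 1) (by omega), Nat.mod_eq_of_lt (by omega)]
      rw [this]
  have hcov' : ∀ i, ∃ k < N, c k = i := by
    intro i
    obtain ⟨k, hk, rfl⟩ := hcov i
    rcases Nat.lt_or_ge k N with h | h
    · exact ⟨k, h, rfl⟩
    · have : k = N := by omega
      subst this
      exact ⟨0, hN, hc.symm⟩
  refine ⟨2 * N, min (A k0) 1, fun k => c (k % N), lt_min (hA0 _) one_pos, min_le_right _ _,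
    ?_, ?_⟩
  · intro i j
    obtain ⟨k, hk, rfl⟩ := hcov' i
    obtain ⟨l, hl, rfl⟩ := hcov' j
    refine ⟨k, l + N - k, by omega, by simp [Nat.mod_eq_of_lt hk], ?_⟩
    have : k + (l + N - k) = l + N := by omega
    simp [this, Nat.mod_eq_of_lt hl]
  · have : ∀ᶠ ε in 𝓝[>] (0:ℝ), ∀ k ∈ Finset.range N, A k ≤ p ε (c k) (c (k+1)) := by
      rw [Filter.eventually_all_finset]
      intro k hk
      exact hA k (by simpa using hk)
    filter_upwards [this] with ε hε k
    have hlt := Nat.mod_lt k hN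
    have h2 := hε (k % N) (by simpa using hlt)
    have h3 := hk0 (k % N) (by simpa using hlt)
    rw [hmod]
    exact (min_le_left _ _).trans (h3.trans h2)

/-- auxiliary recursion for the maximum-principle estimate -/
def recD (a : ℝ) : ℕ → ℝ
  | 0 => 0
  | (r + 1) => (recD a r + 1) / a

lemma recD_nonneg {a : ℝ} (ha : 0 < a) (r : ℕ) : 0 ≤ recD a r := by
  induction r with
  | zero => simp [recD]
  | succ r ih => simp only [recD]; positivity

lemma poisson_osc {m : ℕ} (P : Fin m → Fin m → ℝ) (hP0 : ∀ i j, 0 ≤ P i j)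
    (hP1 : ∀ i, ∑ j, P i j = 1) (K : ℕ) (a : ℝ) (ha : 0 < a) (c : ℕ → Fin m)
    (hc : ∀ i j, ∃ k r, r ≤ K ∧ c k = i ∧ c (k + r) = j)
    (hca : ∀ k, a ≤ P (c k) (c (k + 1)))
    (h u : Fin m → ℝ) (U : ℝ) (hU : 0 ≤ U) (hu : ∀ i, u i ≤ U)
    (hh : ∀ i, h i = u i + ∑ j, P i j * h j) (i j : Fin m) :
    h i - h j ≤ (∑ r ∈ Finset.range (K + 1), recD a r) * U := by
  obtain ⟨i0, -, hi0⟩ := Finset.exists_max_image Finset.univ h ⟨i, Finset.mem_univ i⟩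
  set M := h i0 with hM
  have step : ∀ x k, M - h (c k) ≤ x → M - h (c (k + 1)) ≤ (x + U) / a := by
    intro x k hx
    have h1 : ∑ l, P (c k) l * h l = M - ∑ l, P (c k) l * (M - h l) := by
      simp only [mul_sub, Finset.sum_sub_distrib, ← Finset.sum_mul, hP1]
      ring
    have h2 : P (c k) (c (k+1)) * (M - h (c (k+1))) ≤ ∑ l, P (c k) l * (M - h l) :=
      Finset.single_le_sum (f := fun l => P (c k) l * (M - h l))
        (fun l _ => mul_nonneg (hP0 _ _) (sub_nonneg.mpr (hi0 l (Finset.mem_univ l))))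
        (Finset.mem_univ _)
    have h3 := hh (c k)
    have h4 := hu (c k)
    have h5 : 0 ≤ M - h (c (k+1)) := sub_nonneg.mpr (hi0 _ (Finset.mem_univ _))
    have h6 := mul_le_mul_of_nonneg_right (hca k) h5
    rw [le_div_iff₀ ha]
    linarith
  obtain ⟨k, r, hr, hk, hkr⟩ := hc i0 j
  have key : ∀ r, M - h (c (k + r)) ≤ recD a r * U := by
    intro r
    induction r with
    | zero => simp [recD, hk, hM]
    | succ r ih =>
      have := step _ _ ih
      rw [← add_assoc]
      refine this.trans (le_of_eq ?_)
      simp only [recD]; ring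
  have h1 := key r
  rw [hkr] at h1
  have h2 : recD a r ≤ ∑ r ∈ Finset.range (K + 1), recD a r :=
    Finset.single_le_sum (f := recD a) (fun r _ => recD_nonneg ha r)
      (Finset.mem_range.mpr (by omega))
  have h3 := mul_le_mul_of_nonneg_right h2 hU
  have h4 := hi0 i (Finset.mem_univ i)
  linarith

lemma poisson_exists {m : ℕ} (P : Fin m → Fin m → ℝ) (hP0 : ∀ i j, 0 ≤ P i j)
    (hP1 : ∀ i, ∑ j, P i j = 1) (K : ℕ) (a : ℝ) (ha : 0 < a) (c : ℕ → Fin m)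
    (hc : ∀ i j, ∃ k r, r ≤ K ∧ c k = i ∧ c (k + r) = j)
    (hca : ∀ k, a ≤ P (c k) (c (k + 1))) (π : Fin m → ℝ) (hπ : IsStationaryDist P π)
    (u : Fin m → ℝ) (U : ℝ) (hu : ∀ i, |u i| ≤ U) (hU : 0 ≤ U) (hπu : ∑ i, π i * u i = 0) :
    ∃ h : Fin m → ℝ, (∀ i, h i = u i + ∑ j, P i j * h j) ∧
      ∀ i, |h i| ≤ (∑ r ∈ Finset.range (K + 1), recD a r) * U := by
  obtain ⟨hπ0, hπ1, hπs⟩ := hπ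
  let L : (Fin m → ℝ) →ₗ[ℝ] (Fin m → ℝ) :=
    { toFun := fun h i => h i - ∑ j, P i j * h j + ∑ j, π j * h j
      map_add' := by
        intro x y; ext i
        simp only [Pi.add_apply, mul_add, Finset.sum_add_distrib]; ring
      map_smul' := by
        intro t x; ext i
        simp only [Pi.smul_apply, smul_eq_mul, RingHom.id_apply, mul_add, mul_sub, Finset.mul_sum]
        congr 2
        · congr 1
          exact funext fun j => by ring
        · exact funext fun j => by ring }
  have hL : ∀ h i, L h i = h i - ∑ j, P i j * h j + ∑ j, π j * h j := fun _ _ => rfl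
  have hπP : ∀ h : Fin m → ℝ, ∑ i, π i * ∑ j, P i j * h j = ∑ j, π j * h j := by
    intro h
    simp only [Finset.mul_sum]
    rw [Finset.sum_comm]
    refine Finset.sum_congr rfl fun j _ => ?_
    conv_rhs => rw [hπs j, Finset.sum_mul]
    exact Finset.sum_congr rfl fun i _ => by ring
  have hπL : ∀ h, ∑ i, π i * L h i = ∑ j, π j * h j := by
    intro h
    simp only [hL, mul_add, mul_sub, Finset.sum_add_distrib, Finset.sum_sub_distrib, hπP,
      ← Finset.sum_mul, hπ1]
    ring
  have osc0 : ∀ h : Fin m → ℝ, ∑ j, π j * h j = 0 → ∀ B, (∀ i j, h i - h j ≤ B) →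
      ∀ i, |h i| ≤ B := by
    intro h h0 B hB i
    have e1 : h i = ∑ j, π j * (h i - h j) := by
      simp only [mul_sub, Finset.sum_sub_distrib, ← Finset.sum_mul, hπ1, h0]; ring
    have e2 : - h i = ∑ j, π j * (h j - h i) := by
      simp only [mul_sub, Finset.sum_sub_distrib, ← Finset.sum_mul, hπ1, h0]; ring
    have b : ∑ j, π j * B = B := by rw [← Finset.sum_mul, hπ1, one_mul]
    refine abs_le'.mpr ⟨?_, ?_⟩
    · rw [e1]; refine le_of_le_of_eq ?_ b
      exact Finset.sum_le_sum fun j _ => 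
        mul_le_mul_of_nonneg_left (hB _ _) (hπ0 j)
    · rw [e2]; refine le_of_le_of_eq ?_ b
      exact Finset.sum_le_sum fun j _ => 
        mul_le_mul_of_nonneg_left (hB _ _) (hπ0 j)
  have hinj : Function.Injective L := by
    rw [injective_iff_map_eq_zero]
    intro h h0
    have h1 : ∑ j, π j * h j = 0 := by rw [← hπL, h0]; simp
    have h2 : ∀ i, h i = (fun _ => (0:ℝ)) i + ∑ j, P i j * h j := by
      intro i
      have := congrFun h0 i
      rw [hL, h1] at this
      simp at this ⊢; linarith
    ext i
    have := osc0 h h1 0 (fun i j => by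
      simpa using poisson_osc P hP0 hP1 K a ha c hc hca h (fun _ => 0) 0 le_rfl (by simp) h2 i j) i
    simpa using this
  obtain ⟨h, hh⟩ := (LinearMap.injective_iff_surjective.mp hinj) u
  have h1 : ∑ j, π j * h j = 0 := by rw [← hπL, hh, hπu]
  have h2 : ∀ i, h i = u i + ∑ j, P i j * h j := by
    intro i
    have := congrFun hh i
    rw [hL, h1] at this
    linarith
  exact ⟨h, h2, osc0 h h1 _ (poisson_osc P hP0 hP1 K a ha c hc hca h u U hU
    (fun i => (le_abs_self _).trans (hu i)) h2)⟩

lemma pi_lower {m : ℕ} (P : Fin m → Fin m → ℝ) (hP0 : ∀ i j, 0 ≤ P i j)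
    (K : ℕ) (a : ℝ) (ha : 0 < a) (ha1 : a ≤ 1) (c : ℕ → Fin m)
    (hc : ∀ i j, ∃ k r, r ≤ K ∧ c k = i ∧ c (k + r) = j)
    (hca : ∀ k, a ≤ P (c k) (c (k + 1))) (π : Fin m → ℝ) (hπ : IsStationaryDist P π)
    (j : Fin m) : a ^ K / m ≤ π j := by
  obtain ⟨hπ0, hπ1, hπs⟩ := hπ
  obtain ⟨i0, -, hi0⟩ := Finset.exists_max_image Finset.univ π ⟨j, Finset.mem_univ j⟩
  have hm : (0:ℝ) < m := by exact_mod_cast j.pos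
  have h0 : 1 / m ≤ π i0 := by
    rw [div_le_iff₀ hm, ← hπ1]
    refine (Finset.sum_le_sum hi0).trans ?_
    simp [mul_comm]
  obtain ⟨k, r, hr, hk, hkr⟩ := hc i0 j
  have key : ∀ r, a ^ r * π i0 ≤ π (c (k + r)) := by
    intro r
    induction r with
    | zero => simp [hk]
    | succ r ih =>
      rw [← add_assoc, hπs (c (k+r+1))]
      refine le_trans ?_ (Finset.single_le_sum (f := fun i => π i * P i (c (k+r+1)))
        (fun i _ => mul_nonneg (hπ0 i) (hP0 _ _)) (Finset.mem_univ (c (k+r))))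
      calc a ^ (r+1) * π i0 = (a ^ r * π i0) * a := by ring
        _ ≤ _ := mul_le_mul ih (hca _) ha.le (hπ0 _)
  have h1 := key r
  rw [hkr] at h1
  refine le_trans ?_ h1
  rw [div_eq_mul_one_div]
  exact mul_le_mul (pow_le_pow_of_le_one ha.le ha1 hr) h0 (by positivity) (by positivity)

lemma markov_orth {m : ℕ} {Ω : Type} [MeasurableSpace Ω] (μ : Measure Ω) [IsProbabilityMeasure μ]
    (X : ℕ → Ω → Fin m) (hX : ∀ n, Measurable (X n)) (P : Fin m → Fin m → ℝ)
    (hP1 : ∀ i, ∑ j, P i j = 1)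
    (hM : ∀ n (I : ℕ → Fin m) j, μ.real {ω | (∀ k ≤ n, X k ω = I k) ∧ X (n + 1) ω = j}
      = μ.real {ω | ∀ k ≤ n, X k ω = I k} * P (I n) j)
    (n : ℕ) (F : (ℕ → Fin m) → ℝ) (hF : ∀ I J : ℕ → Fin m, (∀ k ≤ n, I k = J k) → F I = F J)
    (h : Fin m → ℝ) :
    ∫ ω, F (fun k => X k ω) * (h (X (n + 1) ω) - ∑ j, P (X n ω) j * h j) ∂μ = 0 := by
  let Y : Ω → (Fin (n + 1) → Fin m) × Fin m := fun ω => (fun k => X k ω, X (n + 1) ω)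
  have hY : Measurable Y :=
    Measurable.prodMk (f := fun ω => (fun k : Fin (n + 1) => X k ω))
      (measurable_pi_lambda _ (fun k => hX (k : ℕ))) (hX (n + 1))
  let e : (Fin (n + 1) → Fin m) → ℕ → Fin m := fun y k => y ⟨min k n, by omega⟩
  let G : (Fin (n + 1) → Fin m) × Fin m → ℝ := fun z =>
    F (e z.1) * (h z.2 - ∑ j, P (e z.1 n) j * h j)
  have h1 : ∀ ω, F (fun k => X k ω) * (h (X (n + 1) ω) - ∑ j, P (X n ω) j * h j) = G (Y ω) := by
    intro ω
    have e1 : F (fun k => X k ω) = F (e (Y ω).1) := hF _ _ fun k hk => by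
      simp [e, Y, min_eq_left hk]
    have e2 : e (Y ω).1 n = X n ω := by simp [e, Y]
    simp only [G, e1, e2]
    rfl
  simp_rw [h1]
  have : IsProbabilityMeasure (μ.map Y) := Measure.isProbabilityMeasure_map hY.aemeasurable
  rw [← integral_map (f := G) hY.aemeasurable (Measurable.of_discrete).aestronglyMeasurable,
    integral_fintype Integrable.of_finite, Fintype.sum_prod_type]
  refine Finset.sum_eq_zero fun y _ => ?_
  have h2 : ∀ j, (μ.map Y).real {(y, j)} = μ.real {ω | ∀ k ≤ n, X k ω = e y k} * P (e y n) j := by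
    intro j
    rw [← hM, map_measureReal_apply hY (measurableSet_singleton _)]
    congr 1
    ext ω
    simp only [mem_preimage, mem_singleton_iff, mem_ofPred_eq, Prod.ext_iff, Y, funext_iff]
    refine and_congr_left fun _ => ⟨fun H k hk => ?_, fun H k => ?_⟩
    · have := H ⟨k, by omega⟩
      simpa [e, min_eq_left hk] using this
    · have := H k (by omega)
      have hk : (k : ℕ) ≤ n := by omega
      simpa [e, min_eq_left hk] using this
  simp only [h2, G, smul_eq_mul]
  have h3 : ∀ A B C : ℝ, ∑ j, A * P (e y n) j * (B * (h j - C))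
      = A * B * (∑ j, P (e y n) j * h j - C) := by
    intro A B C
    have : ∀ j, A * P (e y n) j * (B * (h j - C))
        = A * B * (P (e y n) j * h j) - A * B * (P (e y n) j * C) := fun j => by ring
    simp only [this, Finset.sum_sub_distrib, ← Finset.mul_sum, ← Finset.sum_mul, hP1]
    ring
  rw [h3, sub_self, mul_zero]

/-- martingale associated with the function `h` -/
def martM {m : ℕ} (P : Fin m → Fin m → ℝ) (h : Fin m → ℝ) (n : ℕ) (I : ℕ → Fin m) : ℝ :=
  ∑ k ∈ Finset.range n, (h (I (k + 1)) - ∑ j, P (I k) j * h j)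

lemma martM_zero {m : ℕ} (P : Fin m → Fin m → ℝ) (h : Fin m → ℝ) (I : ℕ → Fin m) :
    martM P h 0 I = 0 := by simp [martM]

lemma martM_succ {m : ℕ} (P : Fin m → Fin m → ℝ) (h : Fin m → ℝ) (n : ℕ) (I : ℕ → Fin m) :
    martM P h (n + 1) I = martM P h n I + (h (I (n + 1)) - ∑ j, P (I n) j * h j) :=
  Finset.sum_range_succ _ _

lemma prod_Icc_range (g : ℕ → ℝ) (n : ℕ) :
    ∏ k ∈ Finset.Icc 1 n, g k = ∏ k ∈ Finset.range n, g (k + 1) := by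
  induction n with
  | zero => simp
  | succ n ih => rw [Finset.prod_Icc_succ_top (by omega), ih, Finset.prod_range_succ]

lemma sum_Icc_range (g : ℕ → ℝ) (n : ℕ) :
    ∑ k ∈ Finset.Icc 1 n, g k = ∑ k ∈ Finset.range n, g (k + 1) := by
  induction n with
  | zero => simp
  | succ n ih => rw [Finset.sum_Icc_succ_top (by omega), ih, Finset.sum_range_succ]

lemma chain_bound {m : ℕ} {Ω : Type} [MeasurableSpace Ω] (μ : Measure Ω) [IsProbabilityMeasure μ]
    (X : ℕ → Ω → Fin m) (hX : ∀ n, Measurable (X n)) (P : Fin m → Fin m → ℝ)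
    (hP0 : ∀ i j, 0 ≤ P i j) (hP1 : ∀ i, ∑ j, P i j = 1)
    (hM : ∀ n (I : ℕ → Fin m) j, μ.real {ω | (∀ k ≤ n, X k ω = I k) ∧ X (n + 1) ω = j}
      = μ.real {ω | ∀ k ≤ n, X k ω = I k} * P (I n) j)
    (u h : Fin m → ℝ) (H : ℝ) (hH : ∀ i, |h i| ≤ H) (hh : ∀ i, h i = u i + ∑ j, P i j * h j)
    (n : ℕ) (x : ℝ) (hx : 0 < x) :
    μ.real {ω | x ≤ |∑ k ∈ Finset.range n, u (X k ω)|} ≤ 8 * H ^ 2 * (n + 1) / x ^ 2 := by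
  have hm : Nonempty (Fin m) := by
    obtain ⟨ω⟩ : Nonempty Ω := μ.nonempty_of_neZero
    exact ⟨X 0 ω⟩
  have hmf : ∀ (g : Fin m → ℝ) k, Measurable fun ω => g (X k ω) := fun g k =>
    (Measurable.of_discrete (f := g)).comp (hX k)
  have hMm : ∀ n, Measurable fun ω => martM P h n (fun k => X k ω) := fun n =>
    Finset.measurable_sum _ fun k _ => (hmf h _).sub (hmf (fun i => ∑ j, P i j * h j) _)
  have hPh : ∀ i, |∑ j, P i j * h j| ≤ H := by
    intro i
    refine (Finset.abs_sum_le_sum_abs _ _).trans ?_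
    calc ∑ j, |P i j * h j| ≤ ∑ j, P i j * H := Finset.sum_le_sum fun j _ => by
          rw [abs_mul, abs_of_nonneg (hP0 i j)]
          exact mul_le_mul_of_nonneg_left (hH j) (hP0 i j)
      _ = H := by rw [← Finset.sum_mul, hP1, one_mul]
  have hD : ∀ i j, |h i - ∑ l, P j l * h l| ≤ 2 * H := fun i j =>
    (abs_sub _ _).trans (by linarith [hH i, hPh j])
  have hMb : ∀ n I, |martM P h n I| ≤ n * (2 * H) := by
    intro n I
    refine (Finset.abs_sum_le_sum_abs _ _).trans ?_
    refine (Finset.sum_le_sum fun k _ => hD _ _).trans ?_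
    simp
  have hint : ∀ (Z : Ω → ℝ) (C : ℝ), Measurable Z → (∀ ω, |Z ω| ≤ C) → Integrable Z μ :=
    fun Z C hZ hC => Integrable.of_bound hZ.aestronglyMeasurable C (ae_of_all _ hC)
  have hsq : ∀ n, Integrable (fun ω => martM P h n (fun k => X k ω) ^ 2) μ := fun n =>
    hint _ ((n * (2 * H)) ^ 2) ((hMm n).pow_const 2) fun ω => by
      rw [abs_pow]; exact pow_le_pow_left₀ (abs_nonneg _) (hMb n fun k => X k ω) 2
  have hvar : ∀ n : ℕ, ∫ ω, martM P h n (fun k => X k ω) ^ 2 ∂μ ≤ n * (2 * H) ^ 2 := by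
    intro n
    induction n with
    | zero => simp [martM_zero]
    | succ n ih =>
      have horth := markov_orth μ X hX P hP1 hM n (martM P h n) (by
        intro I J hIJ
        refine Finset.sum_congr rfl fun k hk => ?_
        have := Finset.mem_range.mp hk
        rw [hIJ k (by omega), hIJ (k + 1) (by omega)]) h
      have hDm : Measurable fun ω => h (X (n + 1) ω) - ∑ j, P (X n ω) j * h j :=
        (hmf h _).sub (hmf (fun i => ∑ j, P i j * h j) _)
      have i2 : Integrable (fun ω => martM P h n (fun k => X k ω) *
          (h (X (n + 1) ω) - ∑ j, P (X n ω) j * h j)) μ :=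
        hint _ (n * (2 * H) * (2 * H)) ((hMm n).mul hDm) fun ω => by
          rw [abs_mul]
          exact mul_le_mul (hMb n fun k => X k ω) (hD _ _) (abs_nonneg _) ((abs_nonneg _).trans (hMb n fun k => X k ω))
      have hsqD : ∀ ω, (h (X (n + 1) ω) - ∑ j, P (X n ω) j * h j) ^ 2 ≤ (2 * H) ^ 2 := fun ω => by
        rw [← sq_abs]; exact pow_le_pow_left₀ (abs_nonneg _) (hD _ _) 2
      have hle : ∀ ω, martM P h (n + 1) (fun k => X k ω) ^ 2 ≤ martM P h n (fun k => X k ω) ^ 2 +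
          2 * (martM P h n (fun k => X k ω) * (h (X (n + 1) ω) - ∑ j, P (X n ω) j * h j)) + (2 * H) ^ 2 := by
        intro ω
        have : martM P h (n + 1) (fun k => X k ω) = martM P h n (fun k => X k ω) +
          (h (X (n + 1) ω) - ∑ j, P (X n ω) j * h j) := martM_succ _ _ _ _
        rw [this]
        nlinarith [hsqD ω]
      refine (integral_mono (hsq (n + 1)) (((hsq n).add (i2.const_mul 2)).add
        (integrable_const ((2 * H) ^ 2))) hle).trans ?_
      have e1 := integral_add ((hsq n).add (i2.const_mul 2)) (integrable_const ((2 * H) ^ 2))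
      have e2 := integral_add (hsq n) (i2.const_mul 2)
      rw [integral_const_mul, horth] at e2
      refine (e1.trans (congrArg₂ (· + ·) e2 (integral_const _))).le.trans ?_
      simp only [probReal_univ, one_smul]
      push_cast
      linarith
  have htel : ∀ ω n, ∑ k ∈ Finset.range n, u (X k ω) =
      martM P h n (fun k => X k ω) + (h (X 0 ω) - h (X n ω)) := by
    intro ω n
    induction n with
    | zero => simp [martM_zero]
    | succ n ih =>
      have : martM P h (n + 1) (fun k => X k ω) = martM P h n (fun k => X k ω) +
          (h (X (n + 1) ω) - ∑ j, P (X n ω) j * h j) := martM_succ _ _ _ _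
      rw [Finset.sum_range_succ, ih, this]
      linarith [hh (X n ω)]
  have hS : ∀ ω, (∑ k ∈ Finset.range n, u (X k ω)) ^ 2 ≤
      2 * martM P h n (fun k => X k ω) ^ 2 + 8 * H ^ 2 := by
    intro ω
    rw [htel]
    have h1 : |h (X 0 ω) - h (X n ω)| ≤ 2 * H :=
      (abs_sub _ _).trans (by linarith [hH (X 0 ω), hH (X n ω)])
    have h2 : (h (X 0 ω) - h (X n ω)) ^ 2 ≤ (2 * H) ^ 2 := by
      rw [← sq_abs]; exact pow_le_pow_left₀ (abs_nonneg _) h1 2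
    nlinarith [sq_nonneg (martM P h n (fun k => X k ω) - (h (X 0 ω) - h (X n ω)))]
  have hcheb := mul_meas_ge_le_integral_of_nonneg (μ := μ)
    (f := fun ω => 2 * martM P h n (fun k => X k ω) ^ 2 + 8 * H ^ 2)
    (ae_of_all _ fun ω => by simp only [Pi.zero_apply]; positivity)
    (((hsq n).const_mul 2).add (integrable_const _)) (x ^ 2)
  rw [integral_add ((hsq n).const_mul 2) (integrable_const _), integral_const_mul] at hcheb
  simp only [integral_const, probReal_univ, one_smul] at hcheb
  have hmono : μ.real {ω | x ≤ |∑ k ∈ Finset.range n, u (X k ω)|} ≤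
      μ.real {ω | x ^ 2 ≤ 2 * martM P h n (fun k => X k ω) ^ 2 + 8 * H ^ 2} := by
    refine measureReal_mono fun ω hω => ?_
    simp only [mem_ofPred_eq] at hω ⊢
    refine le_trans ?_ (hS ω)
    rw [← sq_abs (∑ k ∈ Finset.range n, u (X k ω))]
    exact pow_le_pow_left₀ hx.le hω 2
  rw [le_div_iff₀ (by positivity)]
  have := mul_le_mul_of_nonneg_left hmono (sq_nonneg x)
  nlinarith [hvar n]

/-- consequences of the path formula -/
lemma path_facts {m : ℕ} {Ω : Type} [MeasurableSpace Ω] (X : ℕ → Ω → Fin m)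
    (hX : ∀ n, Measurable (X n)) (ν : Fin m → Measure Ω) (hν : ∀ i, IsProbabilityMeasure (ν i))
    (P : Fin m → Fin m → ℝ)
    (hMC : ∀ n : ℕ, ∀ I : ℕ → Fin m, ν (I 0) {ω | ∀ k ≤ n, X k ω = I k}
        = ENNReal.ofReal (∏ k ∈ Finset.Icc 1 n, P (I (k - 1)) (I k)))
    (K : ℕ) (a : ℝ) (ha : 0 < a) (c : ℕ → Fin m)
    (hc : ∀ i j, ∃ k r, r ≤ K ∧ c k = i ∧ c (k + r) = j)
    (hca : ∀ k, a ≤ P (c k) (c (k + 1))) :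
    (∀ i j, 0 ≤ P i j) ∧ (∀ i, ∑ j, P i j = 1) ∧
    ∀ i n (I : ℕ → Fin m) j, (ν i).real {ω | (∀ k ≤ n, X k ω = I k) ∧ X (n + 1) ω = j}
      = (ν i).real {ω | ∀ k ≤ n, X k ω = I k} * P (I n) j := by
  have hone : ∀ i j, ν i {ω | X 0 ω = i ∧ X 1 ω = j} = ENNReal.ofReal (P i j) := by
    intro i j
    have := hMC 1 (fun k => if k = 0 then i else j)
    simp at this
    rw [← this]
    congr 1
    ext ω
    simp only [mem_ofPred_eq]
    constructor
    · rintro ⟨h0, h1⟩ k hk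
      interval_cases k <;> simp [h0, h1]
    · intro H
      exact ⟨by simpa using H 0 (by omega), by simpa using H 1 (by omega)⟩
  have hzero : ∀ i, ν i {ω | X 0 ω = i} = 1 := by
    intro i
    have := hMC 0 (fun _ => i)
    simpa using this
  have hP0 : ∀ i j, 0 ≤ P i j := by
    intro i j
    by_contra hneg
    push Not at hneg
    obtain ⟨k, r, hr, hk, hkr⟩ := hc j i
    let I : ℕ → Fin m := fun l => if l = 0 then i else if l ≤ r + 1 then c (k + (l - 1)) else j
    have h1 := hMC (r + 2) I
    have hI0 : I 0 = i := by simp [I]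
    have hI1 : I 1 = j := by simp [I, hk]
    have hIe : I (r + 1) = i := by simp [I, hkr]
    have hIl : I (r + 2) = j := by simp [I]
    have hle : ν (I 0) {ω | ∀ k ≤ r + 2, X k ω = I k} = 0 := by
      have : ν i {ω | X 0 ω = i ∧ X 1 ω = j} = 0 := by
        rw [hone, ENNReal.ofReal_eq_zero]; exact hneg.le
      rw [hI0]
      refine measure_mono_null (fun ω hω => ?_) this
      exact ⟨by rw [hω 0 (by omega), hI0], by rw [hω 1 (by omega), hI1]⟩
    rw [hle, eq_comm, ENNReal.ofReal_eq_zero] at h1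
    have hprod : ∏ k ∈ Finset.Icc 1 (r + 2), P (I (k - 1)) (I k)
        = P i j * (∏ l ∈ Finset.range r, P (c (k + l)) (c (k + l + 1))) * P i j := by
      have e0 : ∏ k ∈ Finset.Icc 1 (r + 2), P (I (k - 1)) (I k)
          = ∏ l ∈ Finset.range (r + 2), P (I l) (I (l + 1)) := by
        rw [prod_Icc_range (fun l => P (I (l - 1)) (I l))]
        rfl
      rw [e0, Finset.prod_range_succ, Finset.prod_range_succ', hIe, hIl, hI0, hI1]
      rw [mul_comm (∏ k ∈ _, _) (P i j)]
      congr 2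
      refine Finset.prod_congr rfl fun l hl => ?_
      have := Finset.mem_range.mp hl
      have e1 : I (l + 1) = c (k + l) := by simp [I]; omega
      have e2 : I (l + 1 + 1) = c (k + l + 1) := by
        simp only [I]
        rw [if_neg (by omega), if_pos (by omega)]
        congr 1
      rw [e1, e2]
    rw [hprod] at h1
    have hp : 0 < ∏ l ∈ Finset.range r, P (c (k + l)) (c (k + l + 1)) :=
      Finset.prod_pos fun l _ => ha.trans_le (hca _)
    have : 0 < P i j * P i j := mul_pos_of_neg_of_neg hneg hneg
    nlinarith [mul_pos this hp]
  have hms : ∀ k i, MeasurableSet {ω | X k ω = i} := fun k i =>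
    hX k (measurableSet_singleton i)
  refine ⟨hP0, ?_, ?_⟩
  · intro i
    have h1 : ν i {ω | X 0 ω = i} = ∑ j, ν i {ω | X 0 ω = i ∧ X 1 ω = j} := by
      have : {ω | X 0 ω = i} = ⋃ j ∈ (Finset.univ : Finset (Fin m)), {ω | X 0 ω = i ∧ X 1 ω = j} := by
        ext ω; simp
      rw [this, measure_biUnion_finset]
      · intro j _ l _ hjl
        refine Set.disjoint_left.mpr fun ω h1 h2 => hjl ?_
        exact h1.2.symm.trans h2.2
      · intro j _
        exact (hms 0 i).inter (hms 1 j)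
    simp only [hzero, hone] at h1
    rw [← ENNReal.ofReal_sum_of_nonneg (fun j _ => hP0 i j)] at h1
    have := congrArg ENNReal.toReal h1
    rw [ENNReal.toReal_ofReal (Finset.sum_nonneg fun j _ => hP0 i j)] at this
    simpa using this.symm
  · intro i n I j
    by_cases hI : I 0 = i
    · subst hI
      have h1 := hMC n I
      have h2 := hMC (n + 1) (fun k => if k ≤ n then I k else j)
      simp only [Nat.zero_le, if_true] at h2
      have hs : {ω | ∀ k ≤ n + 1, X k ω = if k ≤ n then I k else j}
          = {ω | (∀ k ≤ n, X k ω = I k) ∧ X (n + 1) ω = j} := by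
        ext ω
        simp only [mem_ofPred_eq]
        constructor
        · intro H
          refine ⟨fun k hk => ?_, ?_⟩
          · simpa [hk] using H k (by omega)
          · simpa using H (n + 1) le_rfl
        · rintro ⟨H1, H2⟩ k hk
          by_cases hkn : k ≤ n
          · simp [hkn, H1 k hkn]
          · have : k = n + 1 := by omega
            subst this
            simp [H2]
      rw [hs, Finset.prod_Icc_succ_top (by omega)] at h2
      have hpr : ∏ k ∈ Finset.Icc 1 n, P (if k - 1 ≤ n then I (k - 1) else j) (if k ≤ n then I k else j)
          = ∏ k ∈ Finset.Icc 1 n, P (I (k - 1)) (I k) := by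
        refine Finset.prod_congr rfl fun k hk => ?_
        have := Finset.mem_Icc.mp hk
        rw [if_pos (by omega), if_pos (by omega)]
      rw [hpr] at h2
      have hnn : 0 ≤ ∏ k ∈ Finset.Icc 1 n, P (I (k - 1)) (I k) :=
        Finset.prod_nonneg fun _ _ => hP0 _ _
      simp only [Nat.add_sub_cancel, le_refl, if_true, Nat.not_succ_le_self, if_false] at h2
      simp only [Measure.real, h1, h2]
      rw [ENNReal.toReal_ofReal hnn, ENNReal.toReal_ofReal (mul_nonneg hnn (hP0 _ _))]
    · have hz : ν i {ω | ∀ k ≤ n, X k ω = I k} = 0 := by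
        have hc0 : ν i {ω | X 0 ω = i}ᶜ = 0 := by
          rw [prob_compl_eq_zero_iff (hms 0 i)]; exact hzero i
        refine measure_mono_null (fun ω hω => ?_) hc0
        intro h0
        exact hI ((hω 0 (by omega)).symm.trans h0)
      have hz2 : ν i {ω | (∀ k ≤ n, X k ω = I k) ∧ X (n + 1) ω = j} = 0 :=
        measure_mono_null (fun ω hω => hω.1) hz
      simp [Measure.real, hz, hz2]

lemma core_bound {m : ℕ} (ε₀ : ℝ) (hε₀ : 0 < ε₀)
    {Ω : Type} [MeasurableSpace Ω]
    (η : ℝ → ℕ → Ω → Fin m)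
    (Pstart : ℝ → Fin m → Measure Ω)
    (hprob : ∀ ε i, IsProbabilityMeasure (Pstart ε i))
    (hmeas : ∀ ε n, Measurable (η ε n))
    (p : ℝ → Fin m → Fin m → ℝ)
    (hMC : ∀ ε ∈ Ioc (0:ℝ) ε₀, ∀ n : ℕ, ∀ I : ℕ → Fin m,
      Pstart ε (I 0) {ω | ∀ k ≤ n, η ε k ω = I k}
        = ENNReal.ofReal (∏ k ∈ Finset.Icc 1 n, p ε (I (k - 1)) (I k)))
    (hB : CondB p)
    (π : ℝ → Fin m → ℝ)
    (hπ : ∀ᶠ ε in 𝓝[>] (0:ℝ), IsStationaryDist (fun i j => p ε i j) (π ε))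
    (q : ℝ → Fin m → ℝ) (Pq : ℝ → Measure Ω)
    (hq : ∀ ε ∈ Ioc (0:ℝ) ε₀, (∀ i, 0 ≤ q ε i) ∧ ∑ i, q ε i = 1)
    (hmix : ∀ ε ∈ Ioc (0:ℝ) ε₀, Pq ε = ∑ i, ENNReal.ofReal (q ε i) • Pstart ε i)
    (hPq : ∀ ε ∈ Ioc (0:ℝ) ε₀, IsProbabilityMeasure (Pq ε))
    (f : ℝ → Fin m → ℝ) (hf : ∀ ε ∈ Ioc (0:ℝ) ε₀, ∀ i, 0 ≤ f ε i)
    (hH : ∀ᶠ ε in 𝓝[>] (0:ℝ), 0 < ∑ i, π ε i * f ε i) :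
    ∃ C : ℝ, 0 ≤ C ∧ ∀ᶠ ε in 𝓝[>] (0:ℝ), ∀ n : ℕ, ∀ x > 0,
      (Pq ε).real {ω | x ≤ |∑ k ∈ Finset.range n,
        (f ε (η ε k ω) / (∑ i, π ε i * f ε i) - 1)|} ≤ C * (n + 1) / x ^ 2 := by
  obtain ⟨K, a, c, ha, ha1, hc, hca⟩ := condB_extract p hB
  set b : ℝ := a ^ K / m with hb
  set U : ℝ := 1 / b + 1 with hU
  have hb0 : 0 ≤ b := by positivity
  have hU0 : 0 ≤ U := by positivity
  set H : ℝ := (∑ r ∈ Finset.range (K + 1), recD a r) * U with hHdef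
  refine ⟨8 * H ^ 2, by positivity, ?_⟩
  filter_upwards [hca, hπ, hH, Ioc_mem_nhdsGT hε₀] with ε hca hπ hF hε n x hx
  obtain ⟨hP0, hP1, hM⟩ := path_facts (η ε) (hmeas ε) (Pstart ε) (hprob ε) (p ε) (hMC ε hε)
    K a ha c hc hca
  have := hPq ε hε
  set F := ∑ i, π ε i * f ε i with hFdef
  have hlow := pi_lower (p ε) hP0 K a ha ha1 c hc hca (π ε) hπ
  have hbpos : 0 < b := by
    have hm : 0 < m := (c 0).pos
    positivity
  have hreal : ∀ A : Set Ω, (Pq ε).real A = ∑ i, q ε i * (Pstart ε i).real A := by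
    intro A
    rw [Measure.real, hmix ε hε, Measure.finsetSum_apply,
      ENNReal.toReal_sum (fun i _ => by
        simp only [Measure.smul_apply, smul_eq_mul]
        exact ENNReal.mul_ne_top ENNReal.ofReal_ne_top (measure_ne_top _ _))]
    refine Finset.sum_congr rfl fun i _ => ?_
    simp [Measure.smul_apply, ENNReal.toReal_mul, ENNReal.toReal_ofReal ((hq ε hε).1 i), Measure.real]
  have hu : ∀ i, |f ε i / F - 1| ≤ U := by
    intro i
    have h1 : π ε i * f ε i ≤ F := Finset.single_le_sum (f := fun i => π ε i * f ε i)
      (fun j _ => mul_nonneg (hπ.1 j) (hf ε hε j)) (Finset.mem_univ i)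
    have h2 : f ε i / F ≤ 1 / b := by
      rw [div_le_div_iff₀ hF hbpos]
      have := mul_le_mul_of_nonneg_right (hlow i) (hf ε hε i)
      linarith
    have h3 : 0 ≤ f ε i / F := div_nonneg (hf ε hε i) hF.le
    rw [abs_le]
    constructor <;> linarith [one_div_pos.mpr hbpos]
  have hπu : ∑ i, π ε i * (f ε i / F - 1) = 0 := by
    have : ∀ i, π ε i * (f ε i / F - 1) = π ε i * f ε i / F - π ε i := fun i => by ring
    simp only [this, Finset.sum_sub_distrib, ← Finset.sum_div, hπ.2.1]
    rw [← hFdef, div_self hF.ne', sub_self]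
  obtain ⟨h, hh, hhb⟩ := poisson_exists (p ε) hP0 hP1 K a ha c hc hca (π ε) hπ
    (fun i => f ε i / F - 1) U hu hU0 hπu
  refine chain_bound (Pq ε) (η ε) (hmeas ε) (p ε) hP0 hP1 ?_ (fun i => f ε i / F - 1) h H hhb hh n x hx
  intro n I j
  rw [hreal, hreal, Finset.sum_mul]
  refine Finset.sum_congr rfl fun i _ => ?_
  rw [hM]
  ring

lemma exp_close (a b δ : ℝ) (hb : 0 ≤ b) (hδ : δ ≤ 1 / 2) (hδ0 : 0 ≤ δ) (hab : |a - b| ≤ δ * b) :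
    |Real.exp (-a) - Real.exp (-b)| ≤ 2 * δ := by
  have h0 := abs_le.mp hab
  have key : ∀ x y : ℝ, x ≤ y → b / 2 ≤ x → y - x ≤ δ * b →
      Real.exp (-x) - Real.exp (-y) ≤ 2 * δ := by
    intro x y hxy hx hd
    have e1 : Real.exp (-y) = Real.exp (-x) * Real.exp (-(y - x)) := by
      rw [← Real.exp_add]; congr 1; ring
    have e2 : 1 - Real.exp (-(y - x)) ≤ δ * b := by
      linarith [Real.add_one_le_exp (-(y - x))]
    have e3 : Real.exp (-x) ≤ Real.exp (-(b / 2)) := Real.exp_le_exp.mpr (by linarith)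
    have e4 : Real.exp (-(b / 2)) * b ≤ 2 := by
      have e5 : b / 2 ≤ Real.exp (b / 2) := by linarith [Real.add_one_le_exp (b / 2)]
      have e6 : Real.exp (-(b / 2)) * Real.exp (b / 2) = 1 := by
        rw [← Real.exp_add]; simp
      nlinarith [Real.exp_pos (-(b / 2))]
    calc Real.exp (-x) - Real.exp (-y) = Real.exp (-x) * (1 - Real.exp (-(y - x))) := by
          rw [e1]; ring
      _ ≤ Real.exp (-x) * (δ * b) := mul_le_mul_of_nonneg_left e2 (Real.exp_pos _).le
      _ ≤ Real.exp (-(b / 2)) * (δ * b) := mul_le_mul_of_nonneg_right e3 (by positivity)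
      _ = δ * (Real.exp (-(b / 2)) * b) := by ring
      _ ≤ δ * 2 := mul_le_mul_of_nonneg_left e4 hδ0
      _ = 2 * δ := by ring
  have hδb : δ * b ≤ b / 2 := by nlinarith
  rw [abs_le']
  rcases le_total a b with h | h
  · exact ⟨key a b h (by linarith) (by linarith), by
      have := Real.exp_le_exp.mpr (neg_le_neg h); linarith⟩
  · refine ⟨?_, ?_⟩
    · have := Real.exp_le_exp.mpr (neg_le_neg h); linarith
    · have := key b a h (by linarith) (by linarith); linarith

lemma uniform_of_pointwise {Ω : Type} [MeasurableSpace Ω] (l : Filter ℝ) (μ : ℝ → Measure Ω)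
    (κ : ℝ → ℝ → Ω → ℝ) (F : ℝ → ℝ)
    (hμ : ∀ᶠ ε in l, IsProbabilityMeasure (μ ε))
    (hmono : ∀ᶠ ε in l, ∀ ω s t, s ≤ t → κ ε s ω ≤ κ ε t ω)
    (hF : ∀ᶠ ε in l, 0 < F ε)
    (hpt : ∀ t, 0 ≤ t → ∀ δ > (0:ℝ),
      Tendsto (fun ε => (μ ε {ω | δ < |(F ε)⁻¹ * κ ε t ω - t|}).toReal) l (𝓝 0))
    (T : ℝ) (hT : 0 < T) (δ : ℝ) (hδ : 0 < δ) :
    Tendsto (fun ε => (μ ε {ω | ∃ t, 0 ≤ t ∧ t ≤ T ∧ δ < |(F ε)⁻¹ * κ ε t ω - t|}).toReal)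
      l (𝓝 0) := by
  set h : ℝ := δ / 2 with hh
  have hh0 : 0 < h := by positivity
  set K : ℕ := ⌊T / h⌋₊ + 2 with hK
  have hsum : Tendsto (fun ε => ∑ j ∈ Finset.range K,
      (μ ε {ω | δ / 2 < |(F ε)⁻¹ * κ ε (j * h) ω - j * h|}).toReal) l (𝓝 0) := by
    have := tendsto_finsetSum (Finset.range K) fun j _ =>
      hpt (j * h) (by positivity) (δ / 2) (by positivity)
    simpa using this
  refine squeeze_zero' (Eventually.of_forall fun _ => ENNReal.toReal_nonneg) ?_ hsum
  filter_upwards [hμ, hmono, hF] with ε hμ hmono hF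
  refine le_trans ?_ (measureReal_biUnion_finset_le (μ := μ ε) (Finset.range K)
    (fun j : ℕ => {ω | δ / 2 < |(F ε)⁻¹ * κ ε (j * h) ω - j * h|}))
  refine measureReal_mono ?_ (measure_ne_top _ _)
  rintro ω ⟨t, ht0, htT, ht⟩
  by_contra hcon
  simp only [mem_iUnion, mem_ofPred_eq, not_exists, not_lt, Finset.mem_range] at hcon
  set j := ⌊t / h⌋₊ with hj
  have hjT : j ≤ ⌊T / h⌋₊ := Nat.floor_le_floor (by gcongr)
  have h1 := abs_le.mp (hcon j (by omega))
  have h2 := abs_le.mp (hcon (j + 1) (by omega))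
  have h3 : (j : ℝ) * h ≤ t := by
    rw [← le_div_iff₀ hh0]; exact Nat.floor_le (by positivity)
  have h4 : t ≤ ((j + 1 : ℕ) : ℝ) * h := by
    rw [← div_le_iff₀ hh0]; push_cast; exact (Nat.lt_floor_add_one _).le
  have h5 := mul_le_mul_of_nonneg_left (hmono ω _ _ h3) (inv_pos.mpr hF).le
  have h6 := mul_le_mul_of_nonneg_left (hmono ω _ _ h4) (inv_pos.mpr hF).le
  have h7 : ((j + 1 : ℕ) : ℝ) * h = j * h + h := by push_cast; ring
  refine absurd ht (not_lt.mpr (abs_le.mpr ⟨?_, ?_⟩)) <;> linarith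

lemma laplace_close {Ω : Type} [MeasurableSpace Ω] (l : Filter ℝ) (μ : ℝ → Measure Ω)
    (κ : ℝ → Ω → ℝ) (F : ℝ → ℝ)
    (hμ : ∀ᶠ ε in l, IsProbabilityMeasure (μ ε))
    (hκ0 : ∀ᶠ ε in l, ∀ ω, 0 ≤ κ ε ω)
    (hκm : ∀ ε, Measurable (κ ε))
    (hF : ∀ᶠ ε in l, 0 < F ε)
    (hpt : ∀ δ > (0:ℝ),
      Tendsto (fun ε => (μ ε {ω | δ < |(F ε)⁻¹ * κ ε ω - 1|}).toReal) l (𝓝 0))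
    (s : ℝ) (hs : 0 < s) :
    Tendsto (fun ε => (∫ ω, Real.exp (-(s * κ ε ω)) ∂(μ ε)) - Real.exp (-(s * F ε))) l (𝓝 0) := by
  rw [Metric.tendsto_nhds]
  intro e he
  set δ : ℝ := min (1 / 2) (e / 4) with hδ
  have hδ0 : 0 < δ := by positivity
  have hδe : δ ≤ e / 4 := min_le_right _ _
  filter_upwards [hμ, hκ0, hF, (hpt δ hδ0).eventually (gt_mem_nhds hδ0)] with ε hμ hκ0 hF hP
  rw [Real.dist_eq, sub_zero]
  set A := {ω | δ < |(F ε)⁻¹ * κ ε ω - 1|} with hA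
  have hAm : MeasurableSet A :=
    measurableSet_lt measurable_const (((hκm ε).const_mul _).sub_const _).abs
  have hexpm : Measurable fun ω => Real.exp (-(s * κ ε ω)) :=
    (((hκm ε).const_mul s).neg).exp
  have hexple : ∀ ω, Real.exp (-(s * κ ε ω)) ≤ 1 := fun ω => by
    rw [Real.exp_le_one_iff]; have := mul_nonneg hs.le (hκ0 ω); linarith
  have hFle : Real.exp (-(s * F ε)) ≤ 1 := by
    rw [Real.exp_le_one_iff]; have := mul_pos hs hF; linarith
  have hi : Integrable (fun ω => Real.exp (-(s * κ ε ω))) (μ ε) :=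
    Integrable.of_bound hexpm.aestronglyMeasurable 1 (ae_of_all _ fun ω => by
      rw [Real.norm_eq_abs, abs_of_pos (Real.exp_pos _)]; exact hexple ω)
  have e1 : (∫ ω, Real.exp (-(s * κ ε ω)) ∂(μ ε)) - Real.exp (-(s * F ε))
      = ∫ ω, (Real.exp (-(s * κ ε ω)) - Real.exp (-(s * F ε))) ∂(μ ε) := by
    rw [integral_sub hi (integrable_const _)]; simp
  have hi2 : Integrable (fun ω => A.indicator (fun _ => (1:ℝ)) ω) (μ ε) :=
    (integrable_const (1:ℝ)).indicator hAm
  have hb : ∀ ω, |Real.exp (-(s * κ ε ω)) - Real.exp (-(s * F ε))|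
      ≤ 2 * δ + A.indicator (fun _ => (1:ℝ)) ω := by
    intro ω
    by_cases hω : ω ∈ A
    · rw [Set.indicator_of_mem hω, abs_le]
      constructor <;> linarith [Real.exp_pos (-(s * κ ε ω)), Real.exp_pos (-(s * F ε)), hexple ω]
    · rw [Set.indicator_of_notMem hω, add_zero]
      have hω' : |(F ε)⁻¹ * κ ε ω - 1| ≤ δ := not_lt.mp hω
      refine exp_close _ _ δ (by positivity) (min_le_left _ _) hδ0.le ?_
      have : s * κ ε ω - s * F ε = (s * F ε) * ((F ε)⁻¹ * κ ε ω - 1) := by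
        field_simp
      rw [this, abs_mul, abs_of_pos (mul_pos hs hF), mul_comm]
      exact mul_le_mul_of_nonneg_right hω' (mul_pos hs hF).le
  rw [e1]
  calc |∫ ω, (Real.exp (-(s * κ ε ω)) - Real.exp (-(s * F ε))) ∂(μ ε)|
      ≤ ∫ ω, |Real.exp (-(s * κ ε ω)) - Real.exp (-(s * F ε))| ∂(μ ε) :=
        abs_integral_le_integral_abs
    _ ≤ ∫ ω, (2 * δ + A.indicator (fun _ => (1:ℝ)) ω) ∂(μ ε) :=
        integral_mono (hi.sub (integrable_const _)).abs ((integrable_const _).add hi2) hb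
    _ = 2 * δ + (μ ε).real A := by
        rw [integral_add (integrable_const _) hi2, integral_indicator hAm]; simp
    _ < e := by
        have : (μ ε).real A < δ := hP
        linarith

lemma final_abstract {Ω : Type} [MeasurableSpace Ω] (l : Filter ℝ) [l.NeBot] (Pq : ℝ → Measure Ω)
    (κ : ℝ → ℝ → Ω → ℝ) (F : ℝ → ℝ)
    (hμ : ∀ᶠ ε in l, IsProbabilityMeasure (Pq ε))
    (hmono : ∀ᶠ ε in l, ∀ ω s t, s ≤ t → κ ε s ω ≤ κ ε t ω)
    (hκ0 : ∀ᶠ ε in l, ∀ ω, 0 ≤ κ ε 1 ω)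
    (hκm : ∀ ε, Measurable (κ ε 1))
    (hF : ∀ᶠ ε in l, 0 < F ε)
    (hpt : ∀ t, 0 ≤ t → ∀ δ > (0:ℝ),
      Tendsto (fun ε => (Pq ε {ω | δ < |(F ε)⁻¹ * κ ε t ω - t|}).toReal) l (𝓝 0)) :
    (∀ T > (0:ℝ), ∀ δ > (0:ℝ),
      Tendsto (fun ε => (Pq ε {ω | ∃ t, 0 ≤ t ∧ t ≤ T ∧
          δ < |(F ε)⁻¹ * κ ε t ω - t|}).toReal) l (𝓝 0)) ∧
    ((∃ f₀ : ℝ≥0∞, Tendsto (fun ε => ENNReal.ofReal (F ε)) l (𝓝 f₀)) ↔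
      (∃ L : ℝ → ℝ, ∀ s > 0,
        Tendsto (fun ε => ∫ ω, Real.exp (-(s * κ ε 1 ω)) ∂(Pq ε)) l (𝓝 (L s)))) ∧
    ∀ f₀ : ℝ≥0∞, Tendsto (fun ε => ENNReal.ofReal (F ε)) l (𝓝 f₀) →
      (∀ s > 0,
        (f₀ = ⊤ → Tendsto (fun ε => ∫ ω, Real.exp (-(s * κ ε 1 ω)) ∂(Pq ε)) l (𝓝 0)) ∧
        (f₀ ≠ ⊤ → Tendsto (fun ε => ∫ ω, Real.exp (-(s * κ ε 1 ω)) ∂(Pq ε)) l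
          (𝓝 (Real.exp (-(s * f₀.toReal)))))) ∧
      (∀ t > (0:ℝ),
        (f₀ = ⊤ → ∀ c : ℝ, Tendsto (fun ε => (Pq ε {ω | κ ε t ω ≤ c}).toReal) l (𝓝 0)) ∧
        (f₀ ≠ ⊤ → ∀ δ > (0:ℝ),
          Tendsto (fun ε => (Pq ε {ω | δ < |κ ε t ω - f₀.toReal * t|}).toReal) l (𝓝 0))) ∧
      (f₀ ≠ ⊤ → ∀ T > (0:ℝ), ∀ δ > (0:ℝ),
        Tendsto (fun ε => (Pq ε {ω | ∃ t, 0 ≤ t ∧ t ≤ T ∧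
            δ < |κ ε t ω - f₀.toReal * t|}).toReal) l (𝓝 0)) ∧
      (f₀ = ⊤ → ∀ T > (0:ℝ), ∀ t > (0:ℝ), ∀ δ > (0:ℝ),
        Tendsto (fun ε => (Pq ε {ω | δ < |min T (κ ε t ω) - T|}).toReal) l (𝓝 0)) := by
  have huni := uniform_of_pointwise l Pq κ F hμ hmono hF hpt
  have hlap := laplace_close l Pq (fun ε => κ ε 1) F hμ hκ0 hκm hF (hpt 1 zero_le_one)
  have hsub : ∀ A B : ℝ → Set Ω, (∀ᶠ ε in l, A ε ⊆ B ε) →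
      Tendsto (fun ε => (Pq ε (B ε)).toReal) l (𝓝 0) →
      Tendsto (fun ε => (Pq ε (A ε)).toReal) l (𝓝 0) := by
    intro A B hAB hB
    refine squeeze_zero' (Eventually.of_forall fun _ => ENNReal.toReal_nonneg) ?_ hB
    filter_upwards [hAB, hμ] with ε h hμ
    exact measureReal_mono h
  have htop : ∀ f₀ : ℝ≥0∞, Tendsto (fun ε => ENNReal.ofReal (F ε)) l (𝓝 f₀) → f₀ = ⊤ →
      Tendsto F l atTop := by
    intro f₀ h h0
    subst h0
    exact ENNReal.tendsto_ofReal_nhds_top.mp h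
  have hfin : ∀ f₀ : ℝ≥0∞, Tendsto (fun ε => ENNReal.ofReal (F ε)) l (𝓝 f₀) → f₀ ≠ ⊤ →
      Tendsto F l (𝓝 f₀.toReal) := by
    intro f₀ h h0
    refine ((ENNReal.tendsto_toReal h0).comp h).congr' ?_
    filter_upwards [hF] with ε hε
    exact ENNReal.toReal_ofReal hε.le
  have hexp : ∀ f₀ : ℝ≥0∞, Tendsto (fun ε => ENNReal.ofReal (F ε)) l (𝓝 f₀) → ∀ s > 0,
        (f₀ = ⊤ → Tendsto (fun ε => ∫ ω, Real.exp (-(s * κ ε 1 ω)) ∂(Pq ε)) l (𝓝 0)) ∧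
        (f₀ ≠ ⊤ → Tendsto (fun ε => ∫ ω, Real.exp (-(s * κ ε 1 ω)) ∂(Pq ε)) l
          (𝓝 (Real.exp (-(s * f₀.toReal))))) := by
    intro f₀ h s hs
    refine ⟨fun h0 => ?_, fun h0 => ?_⟩
    · have h1 : Tendsto (fun ε => Real.exp (-(s * F ε))) l (𝓝 0) :=
        Real.tendsto_exp_neg_atTop_nhds_zero.comp ((htop f₀ h h0).const_mul_atTop hs)
      have := (hlap s hs).add h1
      simpa using this
    · have h1 : Tendsto (fun ε => Real.exp (-(s * F ε))) l (𝓝 (Real.exp (-(s * f₀.toReal)))) :=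
        (Real.continuous_exp.tendsto _).comp (((hfin f₀ h h0).const_mul s).neg)
      have := (hlap s hs).add h1
      simpa using this
  have hc : ∀ f₀ : ℝ≥0∞, Tendsto (fun ε => ENNReal.ofReal (F ε)) l (𝓝 f₀) → f₀ = ⊤ →
      ∀ t > (0:ℝ), ∀ c : ℝ, Tendsto (fun ε => (Pq ε {ω | κ ε t ω ≤ c}).toReal) l (𝓝 0) := by
    intro f₀ h h0 t ht c
    refine hsub _ _ ?_ (hpt t ht.le (t / 4) (by positivity))
    filter_upwards [hF, (htop f₀ h h0).eventually_ge_atTop (2 * |c| / t)] with ε hFε hge ω hω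
    simp only [mem_ofPred_eq] at hω ⊢
    have h1 : (F ε)⁻¹ * κ ε t ω ≤ t / 2 := by
      rw [inv_mul_le_iff₀ hFε]
      rw [div_le_iff₀ ht] at hge
      have := le_abs_self c
      linarith
    rw [lt_abs]
    right
    linarith
  have hu3 : ∀ f₀ : ℝ≥0∞, Tendsto (fun ε => ENNReal.ofReal (F ε)) l (𝓝 f₀) → f₀ ≠ ⊤ →
      ∀ T > (0:ℝ), ∀ δ > (0:ℝ),
        Tendsto (fun ε => (Pq ε {ω | ∃ t, 0 ≤ t ∧ t ≤ T ∧
            δ < |κ ε t ω - f₀.toReal * t|}).toReal) l (𝓝 0) := by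
    intro f₀ h h0 T hT δ hδ
    set g := f₀.toReal with hg
    have hg0 : 0 ≤ g := ENNReal.toReal_nonneg
    refine hsub _ _ ?_ (huni T hT (δ / (2 * (g + 1))) (by positivity))
    have hlim := hfin f₀ h h0
    filter_upwards [hF, hlim.eventually (gt_mem_nhds (show g < g + 1 by linarith)),
      Metric.tendsto_nhds.mp hlim (δ / (2 * T)) (by positivity)] with ε hFε hlt hd
    rintro ω ⟨t, ht0, htT, ht⟩
    refine ⟨t, ht0, htT, ?_⟩
    rw [Real.dist_eq] at hd
    by_contra hcon
    rw [not_lt, le_div_iff₀ (by positivity)] at hcon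
    have e1 : κ ε t ω - g * t = F ε * ((F ε)⁻¹ * κ ε t ω - t) + (F ε - g) * t := by
      field_simp
      ring
    have e2 : |κ ε t ω - g * t| ≤ F ε * |(F ε)⁻¹ * κ ε t ω - t| + |F ε - g| * t := by
      rw [e1]
      refine (abs_add_le _ _).trans ?_
      rw [abs_mul, abs_mul, abs_of_pos hFε, abs_of_nonneg ht0]
    have e3 : |F ε - g| * t ≤ δ / 2 := by
      calc |F ε - g| * t ≤ (δ / (2 * T)) * T := mul_le_mul hd.le htT ht0 (by positivity)
        _ = δ / 2 := by field_simp
    have e4 : F ε * |(F ε)⁻¹ * κ ε t ω - t| ≤ (g + 1) * |(F ε)⁻¹ * κ ε t ω - t| :=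
      mul_le_mul_of_nonneg_right hlt.le (abs_nonneg _)
    linarith
  refine ⟨huni, ⟨?_, ?_⟩, ?_⟩
  · rintro ⟨f₀, h⟩
    by_cases h0 : f₀ = ⊤
    · exact ⟨fun _ => 0, fun s hs => (hexp f₀ h s hs).1 h0⟩
    · exact ⟨fun s => Real.exp (-(s * f₀.toReal)), fun s hs => (hexp f₀ h s hs).2 h0⟩
  · rintro ⟨L, hL⟩
    have h1 : Tendsto (fun ε => Real.exp (-(F ε))) l (𝓝 (L 1)) := by
      have := (hL 1 one_pos).sub (hlap 1 one_pos)
      simpa using this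
    have h2 : 0 ≤ L 1 := ge_of_tendsto' h1 fun ε => (Real.exp_pos _).le
    have hlog : (fun ε => -Real.log (Real.exp (-(F ε)))) = F := by
      ext ε; simp
    rcases h2.eq_or_lt with h3 | h3
    · refine ⟨⊤, ENNReal.tendsto_ofReal_nhds_top.mpr ?_⟩
      rw [← h3] at h1
      have h4 : Tendsto (fun ε => Real.exp (-(F ε))) l (𝓝[>] 0) :=
        tendsto_nhdsWithin_iff.mpr ⟨h1, Eventually.of_forall fun ε => Real.exp_pos _⟩
      have := tendsto_neg_atBot_atTop.comp (Real.tendsto_log_nhdsGT_zero.comp h4)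
      rw [← hlog]
      exact this
    · refine ⟨ENNReal.ofReal (-Real.log (L 1)), ENNReal.tendsto_ofReal ?_⟩
      rw [← hlog]
      exact (h1.log h3.ne').neg
  · intro f₀ h
    refine ⟨hexp f₀ h, fun t ht => ⟨fun h0 => hc f₀ h h0 t ht, fun h0 δ hδ => ?_⟩, hu3 f₀ h, ?_⟩
    · refine hsub _ _ (Eventually.of_forall fun ε ω hω => ?_) (hu3 f₀ h h0 t ht δ hδ)
      exact ⟨t, ht.le, le_rfl, hω⟩
    · intro h0 T hT t ht δ hδ
      refine hsub _ _ (Eventually.of_forall fun ε ω hω => ?_) (hc f₀ h h0 t ht T)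
      simp only [mem_ofPred_eq] at hω ⊢
      by_contra hlt
      rw [min_eq_left (not_le.mp hlt).le, sub_self, abs_zero] at hω
      exact absurd hω (not_lt.mpr hδ.le)

/-- Lemma 6: under conditions B and H:
(i) `f_ε⁻¹ κ_ε(·)` converges to the identity uniformly on compacts in probability;
(ii) condition I (`f_ε → f₀ ∈ [0,∞]`) is necessary and sufficient for convergence in
distribution (with possibly improper limit) of `κ_ε(1)`, the limit being the constant
`f₀`, with convergence `κ_ε(t) → f₀ t` in probability for every `t > 0`;
(iii) if `f₀ < ∞`, `κ_ε(·) → f₀ ·` uniformly on compacts in probability;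
(iv) if `f₀ = ∞`, `min(T, κ_ε(t)) → T` in probability. -/
theorem stmt13 {m : ℕ} (hm : 0 < m) (ε₀ : ℝ) (hε₀ : 0 < ε₀)
    {Ω : Type} [MeasurableSpace Ω]
    (η : ℝ → ℕ → Ω → Fin m)
    (Pstart : ℝ → Fin m → Measure Ω)
    (hprob : ∀ ε i, IsProbabilityMeasure (Pstart ε i))
    (hmeas : ∀ ε n, Measurable (η ε n))
    (p : ℝ → Fin m → Fin m → ℝ)
    (hMC : ∀ ε ∈ Ioc (0:ℝ) ε₀, ∀ n : ℕ, ∀ I : ℕ → Fin m,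
      Pstart ε (I 0) {ω | ∀ k ≤ n, η ε k ω = I k}
        = ENNReal.ofReal (∏ k ∈ Finset.Icc 1 n, p ε (I (k - 1)) (I k)))
    (hB : CondB p)
    (π : ℝ → Fin m → ℝ)
    (hπ : ∀ᶠ ε in 𝓝[>] (0:ℝ), IsStationaryDist (fun i j => p ε i j) (π ε))
    (q : ℝ → Fin m → ℝ) (Pq : ℝ → Measure Ω)
    (hq : ∀ ε ∈ Ioc (0:ℝ) ε₀, (∀ i, 0 ≤ q ε i) ∧ ∑ i, q ε i = 1)
    (hmix : ∀ ε ∈ Ioc (0:ℝ) ε₀, Pq ε = ∑ i, ENNReal.ofReal (q ε i) • Pstart ε i)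
    (v : ℝ → ℝ) (hvpos : ∀ ε ∈ Ioc (0:ℝ) ε₀, 0 < v ε)
    (hvinf : Tendsto v (𝓝[>] (0:ℝ)) atTop)
    (f : ℝ → Fin m → ℝ) (hf : ∀ ε ∈ Ioc (0:ℝ) ε₀, ∀ i, 0 ≤ f ε i)
    -- condition H
    (hH : ∀ᶠ ε in 𝓝[>] (0:ℝ), 0 < fBar π f v ε) :
    -- (i) f_ε⁻¹ κ_ε(·) converges to the identity uniformly on compacts in probability
    (∀ T > (0:ℝ), ∀ δ > (0:ℝ),
      Tendsto (fun ε => (Pq ε {ω | ∃ t, 0 ≤ t ∧ t ≤ T ∧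
          δ < |(fBar π f v ε)⁻¹ * fStep η f v ε t ω - t|}).toReal)
        (𝓝[>] (0:ℝ)) (𝓝 0)) ∧
    -- (ii) condition I is necessary and sufficient for convergence in distribution
    -- (with possibly improper limit) of κ_ε(1)
    ((∃ f₀ : ℝ≥0∞, Tendsto (fun ε => ENNReal.ofReal (fBar π f v ε)) (𝓝[>] (0:ℝ)) (𝓝 f₀)) ↔
      (∃ L : ℝ → ℝ, ∀ s > 0,
        Tendsto (fun ε => ∫ ω, Real.exp (-(s * fStep η f v ε 1 ω)) ∂(Pq ε))
          (𝓝[>] (0:ℝ)) (𝓝 (L s)))) ∧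
    ∀ f₀ : ℝ≥0∞, Tendsto (fun ε => ENNReal.ofReal (fBar π f v ε)) (𝓝[>] (0:ℝ)) (𝓝 f₀) →
      -- in this case the limiting (possibly improper) random variable is the constant f₀
      (∀ s > 0,
        (f₀ = ⊤ → Tendsto (fun ε => ∫ ω, Real.exp (-(s * fStep η f v ε 1 ω)) ∂(Pq ε))
          (𝓝[>] (0:ℝ)) (𝓝 0)) ∧
        (f₀ ≠ ⊤ → Tendsto (fun ε => ∫ ω, Real.exp (-(s * fStep η f v ε 1 ω)) ∂(Pq ε))
          (𝓝[>] (0:ℝ)) (𝓝 (Real.exp (-(s * f₀.toReal)))))) ∧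
      -- and κ_ε(t) → f₀ t in probability for every t > 0
      (∀ t > (0:ℝ),
        (f₀ = ⊤ → ∀ c : ℝ, Tendsto (fun ε => (Pq ε {ω | fStep η f v ε t ω ≤ c}).toReal)
          (𝓝[>] (0:ℝ)) (𝓝 0)) ∧
        (f₀ ≠ ⊤ → ∀ δ > (0:ℝ),
          Tendsto (fun ε => (Pq ε {ω | δ < |fStep η f v ε t ω - f₀.toReal * t|}).toReal)
            (𝓝[>] (0:ℝ)) (𝓝 0))) ∧
      -- (iii) if f₀ < ∞, uniform convergence on compacts in probability to f₀ t
      (f₀ ≠ ⊤ → ∀ T > (0:ℝ), ∀ δ > (0:ℝ),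
        Tendsto (fun ε => (Pq ε {ω | ∃ t, 0 ≤ t ∧ t ≤ T ∧
            δ < |fStep η f v ε t ω - f₀.toReal * t|}).toReal)
          (𝓝[>] (0:ℝ)) (𝓝 0)) ∧
      -- (iv) if f₀ = ∞, min(T, κ_ε(t)) → T in probability
      (f₀ = ⊤ → ∀ T > (0:ℝ), ∀ t > (0:ℝ), ∀ δ > (0:ℝ),
        Tendsto (fun ε => (Pq ε {ω | δ < |min T (fStep η f v ε t ω) - T|}).toReal)
          (𝓝[>] (0:ℝ)) (𝓝 0)) := by
  have hPq : ∀ ε ∈ Ioc (0:ℝ) ε₀, IsProbabilityMeasure (Pq ε) := by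
    intro ε hε
    refine ⟨?_⟩
    rw [hmix ε hε, Measure.finsetSum_apply]
    have : ∀ i, (ENNReal.ofReal (q ε i) • Pstart ε i) univ = ENNReal.ofReal (q ε i) := by
      intro i
      have := hprob ε i
      simp [Measure.smul_apply]
    simp only [this]
    rw [← ENNReal.ofReal_sum_of_nonneg (fun i _ => (hq ε hε).1 i), (hq ε hε).2]
    simp
  have hIoc : ∀ᶠ ε in 𝓝[>] (0:ℝ), ε ∈ Ioc (0:ℝ) ε₀ := Ioc_mem_nhdsGT hε₀
  have hF0 : ∀ᶠ ε in 𝓝[>] (0:ℝ), 0 < ∑ i, π ε i * f ε i := by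
    filter_upwards [hH, hIoc] with ε h1 h2
    exact (pos_iff_pos_of_mul_pos h1).mp (hvpos ε h2)
  obtain ⟨C, hC0, hC⟩ := core_bound ε₀ hε₀ η Pstart hprob hmeas p hMC hB π hπ q Pq hq hmix hPq f hf hF0
  have hfS : ∀ ε t ω, fStep η f v ε t ω = ∑ k ∈ Finset.range ⌊t * v ε⌋₊, f ε (η ε k ω) := by
    intro ε t ω
    rw [fStep, sum_Icc_range (fun n => f ε (η ε (n - 1) ω))]
    rfl
  refine final_abstract (𝓝[>] (0:ℝ)) Pq (fStep η f v) (fBar π f v) (hIoc.mono hPq) ?_ ?_ ?_ hH ?_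
  · filter_upwards [hIoc] with ε hε ω s t hst
    rw [hfS, hfS]
    refine Finset.sum_le_sum_of_subset_of_nonneg ?_ fun k _ _ => hf ε hε _
    refine Finset.range_subset_range.mpr (Nat.floor_le_floor ?_)
    exact mul_le_mul_of_nonneg_right hst (hvpos ε hε).le
  · filter_upwards [hIoc] with ε hε ω
    rw [hfS]
    exact Finset.sum_nonneg fun k _ => hf ε hε _
  · intro ε
    have : fStep η f v ε 1 = fun ω => ∑ k ∈ Finset.range ⌊1 * v ε⌋₊, f ε (η ε k ω) :=
      funext fun ω => hfS ε 1 ω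
    rw [this]
    exact Finset.measurable_sum _ fun k _ =>
      (Measurable.of_discrete (f := f ε)).comp (hmeas ε k)
  · intro t ht δ hδ
    have hlim : Tendsto (fun ε => 4 * C * (t + 1) / δ ^ 2 * (v ε)⁻¹) (𝓝[>] (0:ℝ)) (𝓝 0) := by
      have := (tendsto_inv_atTop_zero.comp hvinf).const_mul (4 * C * (t + 1) / δ ^ 2)
      simpa using this
    refine squeeze_zero' (Eventually.of_forall fun _ => ENNReal.toReal_nonneg) ?_ hlim
    filter_upwards [hIoc, hF0, hC, hvinf.eventually_ge_atTop 1,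
      hvinf.eventually_ge_atTop (2 / δ)] with ε hε hF hCε hv1 hv2
    have := hPq ε hε
    have hv : 0 < v ε := hvpos ε hε
    set F := ∑ i, π ε i * f ε i with hFdef
    have hfl := Nat.floor_le (mul_nonneg ht hv.le)
    have hfl2 := Nat.lt_floor_add_one (t * v ε)
    set n := ⌊t * v ε⌋₊ with hn
    rw [div_le_iff₀ hδ] at hv2
    refine (measureReal_mono (μ := Pq ε) (s₂ := {ω | δ * v ε / 2 ≤ |∑ k ∈ Finset.range n,
      (f ε (η ε k ω) / F - 1)|}) ?_ (measure_ne_top _ _)).trans ((hCε n (δ * v ε / 2) (by positivity)).trans ?_)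
    · intro ω hω
      simp only [mem_ofPred_eq] at hω ⊢
      rw [Finset.sum_sub_distrib, ← Finset.sum_div]
      rw [hfS, ← hn] at hω
      set S := ∑ k ∈ Finset.range n, f ε (η ε k ω) with hS
      have e1 : (fBar π f v ε)⁻¹ * S - t = (S / F - n + (n - t * v ε)) / v ε := by
        have : fBar π f v ε = v ε * F := rfl
        rw [this]
        field_simp
        ring
      rw [e1, abs_div, abs_of_pos hv, lt_div_iff₀ hv] at hω
      have e2 := abs_add_le (S / F - n) (n - t * v ε)
      have e3 : |(n : ℝ) - t * v ε| ≤ 1 := by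
        rw [abs_le]; constructor <;> linarith
      simp only [Finset.sum_const, Finset.card_range, nsmul_eq_mul, mul_one]
      linarith
    · have e1 : (n : ℝ) + 1 ≤ (t + 1) * v ε := by linarith
      calc C * (n + 1) / (δ * v ε / 2) ^ 2 ≤ C * ((t + 1) * v ε) / (δ * v ε / 2) ^ 2 := by gcongr
        _ = 4 * C * (t + 1) / δ ^ 2 * (v ε)⁻¹ := by
          field_simp
          try ring
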